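/- Let k ≥ 1, let g(k) = (k+1)(⌊k/2⌋+1) − 1, let D be a finite digraph, let T be a (g(k)−1, g(k)−1)-linked set in D with |T| = 2g(k)−1, let B_T be the T-bramble, and let P be a directed path in D whose vertex set is a hitting set of B_T. If S_i is an (i)-split of P with 1 ≤ i ≤ k, then the set A = {a_1, …, a_i} of its split vertices is well-linked in D. -/

import Mathlib

/-- A digraph on vertex type `V`, given by its adjacency relation
(loops are allowed; parallel edges are irrelevant here). -/
structure Dgraph (V : Type) where
  Adj : V → V → Prop

namespace Dgraph

variable {V : Type}

/-- There is a directed walk from `u` to `v` in `D` using only vertices of `S`. -/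
def ReachIn (D : Dgraph V) (S : Set V) (u v : V) : Prop :=
  u ∈ S ∧ v ∈ S ∧ Relation.ReflTransGen (fun a b => a ∈ S ∧ b ∈ S ∧ D.Adj a b) u v

/-- The subdigraph of `D` induced on `S` is strongly connected. -/
def StronglyConnectedOn (D : Dgraph V) (S : Set V) : Prop :=
  ∀ u ∈ S, ∀ v ∈ S, D.ReachIn S u v

/-- `C` is the vertex set of a strong component of the subdigraph of `D` induced on `A`,
i.e. a maximal subset of `A` inducing a strongly connected subdigraph. -/
def IsStrongComponentOn (D : Dgraph V) (A C : Set V) : Prop :=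
  C ⊆ A ∧ D.StronglyConnectedOn C ∧
    ∀ C' : Set V, C ⊆ C' → C' ⊆ A → D.StronglyConnectedOn C' → C' = C

/-- `Z` is a `(T, r)`-balanced separator of `D`: every strong component of `D \ Z`
contains at most `r` vertices of `T`. -/
def IsBalancedSeparator (D : Dgraph V) (T : Set V) (r : ℕ) (Z : Set V) : Prop :=
  ∀ C : Set V, D.IsStrongComponentOn Zᶜ C → (C ∩ T).ncard ≤ r

/-- `T` is `(k, r)`-linked in `D`: every `(T, r)`-balanced separator has size at least `k + 1`. -/
def IsLinked (D : Dgraph V) (T : Set V) (k r : ℕ) : Prop :=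
  ∀ Z : Set V, D.IsBalancedSeparator T r Z → k + 1 ≤ Z.ncard

/-- `β` is a haven of order `k` in `D`: it assigns to every `Z` with `|Z| ≤ k - 1`
the vertex set of a strong component of `D \ Z`, monotonically. -/
def IsHaven (D : Dgraph V) (k : ℕ) (β : Set V → Set V) : Prop :=
  (∀ Z : Set V, Z.ncard < k → D.IsStrongComponentOn Zᶜ (β Z)) ∧
  (∀ Z Z' : Set V, Z.ncard < k → Z' ⊆ Z → β Z ⊆ β Z')

/-- A bramble in `D`: a family of (vertex sets of) strongly connected subdigraphs
any two of which touch. -/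
def IsBramble (D : Dgraph V) (ℬ : Set (Set V)) : Prop :=
  (∀ B ∈ ℬ, D.StronglyConnectedOn B) ∧
  ∀ B ∈ ℬ, ∀ B' ∈ ℬ,
    (B ∩ B').Nonempty ∨
      ((∃ u ∈ B, ∃ v ∈ B', D.Adj u v) ∧ (∃ u ∈ B', ∃ v ∈ B, D.Adj u v))

/-- `C` is a hitting set of the family `ℬ`. -/
def IsHittingSet (ℬ : Set (Set V)) (C : Set V) : Prop :=
  ∀ B ∈ ℬ, (C ∩ B).Nonempty

/-- The order of a bramble: the minimum size of a hitting set. -/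
noncomputable def brambleOrder (ℬ : Set (Set V)) : ℕ :=
  sInf {n : ℕ | ∃ C : Set V, IsHittingSet ℬ C ∧ C.ncard = n}

/-- The `T`-bramble with threshold `g`: all induced strongly connected subdigraphs
containing at least `g` vertices of `T`. -/
def TBramble (D : Dgraph V) (T : Set V) (g : ℕ) : Set (Set V) :=
  {B : Set V | D.StronglyConnectedOn B ∧ g ≤ (B ∩ T).ncard}

/-- The restricted bramble `ℬ(X)`: elements of `ℬ` intersecting `X`. -/
def restrictedBramble (ℬ : Set (Set V)) (X : Set V) : Set (Set V) :=
  {B ∈ ℬ | (B ∩ X).Nonempty}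

/-- The complement bramble `ℬ̄(X)`: elements of `ℬ` disjoint from `X`. -/
def complementBramble (ℬ : Set (Set V)) (X : Set V) : Set (Set V) :=
  {B ∈ ℬ | B ∩ X = ∅}

/-- A directed path in `D`, as a duplicate-free list of consecutively adjacent vertices. -/
def IsPath (D : Dgraph V) (P : List V) : Prop :=
  P.Nodup ∧ P.Chain' D.Adj

/-- A directed path in `D` starting in `A` and ending in `B`. -/
def IsPathFromTo (D : Dgraph V) (P : List V) (A B : Set V) : Prop :=
  D.IsPath P ∧ ∃ h : P ≠ [], P.head h ∈ A ∧ P.getLast h ∈ B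

/-- There are `n` pairwise vertex-disjoint directed paths from `A` to `B` in `D`. -/
def HasDisjointPaths (D : Dgraph V) (A B : Set V) (n : ℕ) : Prop :=
  ∃ Ps : Fin n → List V, (∀ i, D.IsPathFromTo (Ps i) A B) ∧
    ∀ i j, i ≠ j → ∀ v, v ∈ Ps i → v ∉ Ps j

/-- `A` is well-linked in `D`. -/
def WellLinked (D : Dgraph V) (A : Set V) : Prop :=
  ∀ X Y : Set V, X ⊆ A → Y ⊆ A → Disjoint X Y → X.ncard = Y.ncard →
    D.HasDisjointPaths X Y X.ncard

end Dgraph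
/-- `g(k) = (k+1)(⌊k/2⌋+1) - 1`. -/
def gfun (k : ℕ) : ℕ := (k + 1) * (k / 2 + 1) - 1

open Dgraph in
/-- An `(i)`-split of the path `P` (with respect to the `T`-bramble with threshold `g(k)`):
`P` decomposes as `Q 1 ++ [a 1] ++ ⋯ ++ Q i ++ [a i] ++ Pi`, each bramble `ℬ j ⊆ B_T` has
order at least `⌊k/2⌋` and is hit by `V(Q j)`, `X = ⋃ j (V(Q j) ∪ {a j})`, and the
complement bramble `B̄_T(X)` has order at least `g(k) - i(⌊k/2⌋ + 1)`. -/
def IsSplit {V : Type} (D : Dgraph V) (T : Set V) (k : ℕ) (P : List V) (i : ℕ)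
    (Q : Fin i → List V) (Pi : List V) (ℬ : Fin i → Set (Set V))
    (a : Fin i → V) (X : Set V) : Prop :=
  P = (List.ofFn fun j : Fin i => Q j ++ [a j]).flatten ++ Pi ∧
  (∀ j, Q j ≠ []) ∧
  (∀ j, k / 2 ≤ brambleOrder (ℬ j)) ∧
  (∀ j, ℬ j ⊆ D.TBramble T (gfun k)) ∧
  (∀ j, IsHittingSet (ℬ j) {v | v ∈ Q j}) ∧
  X = (⋃ j, ({v | v ∈ Q j} ∪ {a j})) ∧
  gfun k - i * (k / 2 + 1) ≤ brambleOrder (complementBramble (D.TBramble T (gfun k)) X)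

namespace Dgraph

variable {V : Type}

theorem ReachIn.mono' {D D' : Dgraph V} {S S' : Set V} (hS : S ⊆ S')
    (hD : ∀ u ∈ S, ∀ v ∈ S, D.Adj u v → D'.Adj u v) {u v : V} (h : D.ReachIn S u v) :
    D'.ReachIn S' u v :=
  ⟨hS h.1, hS h.2.1, Relation.ReflTransGen.mono
    (fun _ _ h => ⟨hS h.1, hS h.2.1, hD _ h.1 _ h.2.1 h.2.2⟩) _ _ h.2.2⟩

theorem ReachIn.mono {D : Dgraph V} {S S' : Set V} (hS : S ⊆ S')
    {u v : V} (h : D.ReachIn S u v) : D.ReachIn S' u v :=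
  h.mono' hS fun _ _ _ _ h => h

theorem ReachIn.trans {D : Dgraph V} {S : Set V} {u v w : V} (h : D.ReachIn S u v)
    (h' : D.ReachIn S v w) : D.ReachIn S u w :=
  ⟨h.1, h'.2.1, h.2.2.trans h'.2.2⟩

theorem ReachIn.rfl' {D : Dgraph V} {S : Set V} {u : V} (h : u ∈ S) : D.ReachIn S u u :=
  ⟨h, h, .refl⟩

theorem ReachIn.step {D : Dgraph V} {S : Set V} {u v : V} (hu : u ∈ S) (hv : v ∈ S)
    (h : D.Adj u v) : D.ReachIn S u v :=
  ⟨hu, hv, .single ⟨hu, hv, h⟩⟩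

/-- Induction from the left end. -/
theorem ReachIn.ind {D : Dgraph V} {S : Set V} {u w : V} (h : D.ReachIn S u w)
    {p : V → Prop} (h0 : p u)
    (hs : ∀ c d, D.ReachIn S u c → c ∈ S → d ∈ S → D.Adj c d → p c → p d) : p w := by
  obtain ⟨hu, -, h⟩ := h
  have : (D.ReachIn S u w) ∧ p w := by
    induction h with
    | refl => exact ⟨.rfl' hu, h0⟩
    | tail _ hbc ih =>
      exact ⟨ih.1.trans (.step hbc.1 hbc.2.1 hbc.2.2),
        hs _ _ ih.1 hbc.1 hbc.2.1 hbc.2.2 ih.2⟩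
  exact this.2

theorem ReachIn.ind_head {D : Dgraph V} {S : Set V} {u w : V} (h : D.ReachIn S u w)
    {p : V → Prop} (h0 : p w)
    (hs : ∀ c d, D.ReachIn S d w → c ∈ S → d ∈ S → D.Adj c d → p d → p c) : p u := by
  obtain ⟨-, hw, h⟩ := h
  have : (D.ReachIn S u w) ∧ p u := by
    induction h using Relation.ReflTransGen.head_induction_on with
    | refl => exact ⟨.rfl' hw, h0⟩
    | head hbc _ ih =>
      exact ⟨.trans (.step hbc.1 hbc.2.1 hbc.2.2) ih.1,
        hs _ _ ih.1 hbc.1 hbc.2.1 hbc.2.2 ih.2⟩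
  exact this.2

/-- `S` separates `A` from `B`. -/
def Sep (D : Dgraph V) (A B S : Set V) : Prop :=
  ∀ a ∈ A, ∀ b ∈ B, ¬ D.ReachIn Sᶜ a b

/-- Trim at the end. -/
theorem ReachIn.trim_end {D : Dgraph V} {W : Set V} {a b : V} (h : D.ReachIn W a b) :
    ∃ W' ⊆ W, D.ReachIn W' a b ∧ ∀ v ∈ W', v = b ∨ D.ReachIn (W \ {b}) a v := by
  refine ⟨{v | v = b ∨ D.ReachIn (W \ {b}) a v}, ?_, ?_, fun v hv => hv⟩
  · rintro v (rfl | hv)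
    · exact h.2.1
    · exact hv.2.1.1
  · have key : ∀ w, D.ReachIn W a w →
        D.ReachIn {v | v = b ∨ D.ReachIn (W \ {b}) a v} a b ∨
        (D.ReachIn {v | v = b ∨ D.ReachIn (W \ {b}) a v} a w ∧ D.ReachIn (W \ {b}) a w) := by
      intro w hw
      refine hw.ind (p := fun w => D.ReachIn {v | v = b ∨ D.ReachIn (W \ {b}) a v} a b ∨
        (D.ReachIn {v | v = b ∨ D.ReachIn (W \ {b}) a v} a w ∧ D.ReachIn (W \ {b}) a w)) ?_ ?_
      · by_cases hab : a = b
        · left; subst hab; exact .rfl' (Or.inl rfl)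
        · have : D.ReachIn (W \ {b}) a a := .rfl' ⟨h.1, hab⟩
          exact Or.inr ⟨.rfl' (Or.inr this), this⟩
      · intro c d _ hc hd hcd ih
        rcases ih with ih | ⟨ih1, ih2⟩
        · exact Or.inl ih
        · by_cases hdb : d = b
          · left; subst hdb
            exact ih1.trans (.step (Or.inr ih2) (Or.inl rfl) hcd)
          · have : D.ReachIn (W \ {b}) a d := ih2.trans (.step ih2.2.1 ⟨hd, hdb⟩ hcd)
            exact Or.inr ⟨ih1.trans (.step (Or.inr ih2) (Or.inr this) hcd), this⟩
    rcases key b h with h | h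
    · exact h
    · exact h.1

/-- Reverse digraph. -/
def rev (D : Dgraph V) : Dgraph V := ⟨fun a b => D.Adj b a⟩

theorem ReachIn.rev {D : Dgraph V} {S : Set V} {u v : V} (h : D.ReachIn S u v) :
    D.rev.ReachIn S v u := by
  refine h.ind (p := fun w => D.rev.ReachIn S w u) (.rfl' h.1) ?_
  intro c d _ hc hd hcd ih
  exact .trans (.step hd hc hcd) ih

theorem ReachIn.trim_start {D : Dgraph V} {W : Set V} {a b : V} (h : D.ReachIn W a b) :
    ∃ W' ⊆ W, D.ReachIn W' a b ∧ ∀ v ∈ W', v = a ∨ D.ReachIn (W \ {a}) v b := by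
  obtain ⟨W', h1, h2, h3⟩ := h.rev.trim_end
  exact ⟨W', h1, h2.rev, fun v hv => (h3 v hv).imp id fun h => h.rev⟩

theorem menger_aux [Finite V] (N : ℕ) : ∀ (D : Dgraph V) (A B : Set V) (n : ℕ),
    {p : V × V | D.Adj p.1 p.2}.ncard = N →
    (∀ S, D.Sep A B S → n ≤ S.ncard) →
    ∃ W : Fin n → Set V, (∀ i, ∃ a ∈ A, ∃ b ∈ B, D.ReachIn (W i) a b) ∧
      ∀ i j, i ≠ j → Disjoint (W i) (W j) := by
  induction N with
  | zero =>
    intro D A B n hN hS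
    have hno : ∀ u v, ¬ D.Adj u v := by
      intro u v huv
      rw [Set.ncard_eq_zero] at hN
      have : (u, v) ∈ {p : V × V | D.Adj p.1 p.2} := huv
      rw [hN] at this
      exact this
    have h1 : n ≤ (A ∩ B).ncard := by
      apply hS
      intro a ha b hb hab
      have : b = a := hab.ind (p := fun w => w = a) rfl (fun c d _ _ _ h => (hno _ _ h).elim)
      subst this
      exact hab.1 ⟨ha, hb⟩
    have : Nonempty (Fin n ↪ (A ∩ B : Set V)) := by
      have := Fintype.ofFinite (A ∩ B : Set V)
      apply Function.Embedding.nonempty_of_card_le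
      rw [Fintype.card_fin, ← Nat.card_eq_fintype_card]
      exact h1
    obtain ⟨f⟩ := this
    refine ⟨fun i => {(f i : V)}, fun i => ⟨f i, (f i).2.1, f i, (f i).2.2, .rfl' rfl⟩, ?_⟩
    intro i j hij
    rw [Set.disjoint_singleton]
    intro h
    exact hij (f.injective (Subtype.ext h))
  | succ N ih =>
    intro D A B n hN hS
    have hne : {p : V × V | D.Adj p.1 p.2}.Nonempty := by
      rw [← Set.ncard_pos]; omega
    obtain ⟨⟨x, y⟩, hxy⟩ := hne
    have hxy' : D.Adj x y := hxy
    let D' : Dgraph V := ⟨fun u v => D.Adj u v ∧ ¬ (u = x ∧ v = y)⟩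
    have hD'D : ∀ u v, D'.Adj u v → D.Adj u v := fun u v h => h.1
    have hDD' : ∀ u v, D.Adj u v → (u ≠ x ∨ v ≠ y) → D'.Adj u v := fun u v h h' =>
      ⟨h, by tauto⟩
    have hN' : {p : V × V | D'.Adj p.1 p.2}.ncard = N := by
      have : {p : V × V | D'.Adj p.1 p.2} = {p : V × V | D.Adj p.1 p.2} \ {(x, y)} := by
        ext ⟨u, v⟩
        simp [D']
      rw [this, Set.ncard_diff_singleton_of_mem hxy, hN]; rfl
    by_cases hsep : ∀ S, D'.Sep A B S → n ≤ S.ncard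
    · obtain ⟨W, h1, h2⟩ := ih D' A B n hN' hsep
      refine ⟨W, fun i => ?_, h2⟩
      obtain ⟨a, ha, b, hb, h⟩ := h1 i
      exact ⟨a, ha, b, hb, h.mono' subset_rfl fun u _ v _ => hD'D u v⟩
    push Not at hsep
    obtain ⟨S, hSsep, hSn⟩ := hsep
    have hPs : n ≤ (insert x S).ncard := by
      apply hS
      intro a ha b hb hab
      refine hSsep a ha b hb (hab.mono' (Set.compl_subset_compl.2 (Set.subset_insert _ _)) ?_)
      intro u hu v hv huv
      refine hDD' u v huv (Or.inl ?_)
      rintro rfl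
      exact hu (Set.mem_insert _ _)
    have hQs : n ≤ (insert y S).ncard := by
      apply hS
      intro a ha b hb hab
      refine hSsep a ha b hb (hab.mono' (Set.compl_subset_compl.2 (Set.subset_insert _ _)) ?_)
      intro u hu v hv huv
      refine hDD' u v huv (Or.inr ?_)
      rintro rfl
      exact hv (Set.mem_insert _ _)
    have hxS : x ∉ S := by
      intro h; rw [Set.insert_eq_of_mem h] at hPs; omega
    have hyS : y ∉ S := by
      intro h; rw [Set.insert_eq_of_mem h] at hQs; omega
    have hPn : (insert x S).ncard = n := by
      rw [Set.ncard_insert_of_notMem hxS] at *; omega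
    have hQn : (insert y S).ncard = n := by
      rw [Set.ncard_insert_of_notMem hyS] at *; omega
    -- the two path systems
    have hA : ∀ Z, D'.Sep A (insert x S) Z → n ≤ Z.ncard := by
      intro Z hZ
      apply hS
      intro a ha b hb hab
      have haP : a ∉ insert x S := fun h => hZ a ha a h (.rfl' hab.1)
      have : D'.ReachIn (Sᶜ ∩ Zᶜ) a b := by
        refine hab.ind (p := fun w => D'.ReachIn (Sᶜ ∩ Zᶜ) a w) ?_ ?_
        · exact .rfl' ⟨fun h => haP (Or.inr h), hab.1⟩
        · intro c d _ hc hd hcd ih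
          have hcP : c ∉ insert x S := fun h => hZ a ha c h (ih.mono Set.inter_subset_right)
          have hcd' : D'.Adj c d := hDD' c d hcd (Or.inl fun h => hcP (Or.inl h))
          have hdS : d ∉ S := fun h => hZ a ha d (Or.inr h)
            ((ih.mono Set.inter_subset_right).trans (.step hc hd hcd'))
          exact ih.trans (.step ih.2.1 ⟨hdS, hd⟩ hcd')
      exact hSsep a ha b hb (this.mono Set.inter_subset_left)
    have hB : ∀ Z, D'.Sep (insert y S) B Z → n ≤ Z.ncard := by
      intro Z hZ
      apply hS
      intro a ha b hb hab
      have hbP : b ∉ insert y S := fun h => hZ b h b hb (.rfl' hab.2.1)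
      have : D'.ReachIn (Sᶜ ∩ Zᶜ) a b := by
        refine hab.ind_head (p := fun w => D'.ReachIn (Sᶜ ∩ Zᶜ) w b) ?_ ?_
        · exact .rfl' ⟨fun h => hbP (Or.inr h), hab.2.1⟩
        · intro c d _ hc hd hcd ih
          have hdP : d ∉ insert y S := fun h => hZ d h b hb (ih.mono Set.inter_subset_right)
          have hcd' : D'.Adj c d := hDD' c d hcd (Or.inr fun h => hdP (Or.inl h))
          have hcS : c ∉ S := fun h => hZ c (Or.inr h) b hb
            (.trans (.step hc hd hcd') (ih.mono Set.inter_subset_right))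
          exact .trans (.step ⟨hcS, hc⟩ ih.1 hcd') ih
      exact hSsep a ha b hb (this.mono Set.inter_subset_left)
    obtain ⟨W, hW, hWd⟩ := ih D' A (insert x S) n hN' hA
    obtain ⟨U, hU, hUd⟩ := ih D' (insert y S) B n hN' hB
    choose a ha p hp hap using hW
    choose q hq b hb hqb using hU
    choose W' hW'W hW'r hW't using fun i => (hap i).trim_end
    choose U' hU'U hU'r hU't using fun i => (hqb i).trim_start
    have hpinj : Function.Injective p := by
      intro i j hij
      by_contra h
      exact Set.disjoint_left.1 (hWd i j h) (hap i).2.1 (hij ▸ (hap j).2.1)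
    have hqinj : Function.Injective q := by
      intro i j hij
      by_contra h
      exact Set.disjoint_left.1 (hUd i j h) (hqb i).1 (hij ▸ (hqb j).1)
    have hprange : Set.range p = insert x S := by
      apply Set.eq_of_subset_of_ncard_le
      · rintro _ ⟨i, rfl⟩; exact hp i
      · rw [hPn, Set.ncard_range_of_injective hpinj]; simp
      · exact Set.toFinite _
    have hqrange : Set.range q = insert y S := by
      apply Set.eq_of_subset_of_ncard_le
      · rintro _ ⟨i, rfl⟩; exact hq i
      · rw [hQn, Set.ncard_range_of_injective hqinj]; simp
      · exact Set.toFinite _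
    have hWP : ∀ i, ∀ v ∈ W i, v ∈ insert x S → v = p i := by
      intro i v hv hvP
      rw [← hprange] at hvP
      obtain ⟨j, rfl⟩ := hvP
      by_contra h
      exact Set.disjoint_left.1 (hWd i j (fun h' => h (h' ▸ rfl))) hv (hap j).2.1
    have hUQ : ∀ i, ∀ v ∈ U i, v ∈ insert y S → v = q i := by
      intro i v hv hvP
      rw [← hqrange] at hvP
      obtain ⟨j, rfl⟩ := hvP
      by_contra h
      exact Set.disjoint_left.1 (hUd i j (fun h' => h (h' ▸ rfl))) hv (hqb j).1
    have hmeet : ∀ i j v, v ∈ W' i → v ∈ U' j → v ∈ S := by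
      intro i j v hv1 hv2
      by_contra hvS
      have r1 : D'.ReachIn Sᶜ (a i) v := by
        rcases hW't i v hv1 with rfl | h
        · refine ReachIn.mono (fun w hw (hwS : w ∈ S) => hvS ?_) (hap i)
          rw [← hWP i w hw (Or.inr hwS)]; exact hwS
        · refine h.mono fun w hw hwS => hw.2 (hWP i w hw.1 (Or.inr hwS))
      have r2 : D'.ReachIn Sᶜ v (b j) := by
        rcases hU't j v hv2 with rfl | h
        · refine ReachIn.mono (fun w hw (hwS : w ∈ S) => hvS ?_) (hqb j)
          rw [← hUQ j w hw (Or.inr hwS)]; exact hwS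
        · refine h.mono fun w hw hwS => hw.2 (hUQ j w hw.1 (Or.inr hwS))
      exact hSsep _ (ha i) _ (hb j) (r1.trans r2)
    have hσ : ∀ i, ∃ j, (p i = x ∧ q j = y) ∨ (p i ∈ S ∧ q j = p i) := by
      intro i
      rcases hp i with h | h
      · have : y ∈ Set.range q := by rw [hqrange]; exact Or.inl rfl
        obtain ⟨j, hj⟩ := this
        exact ⟨j, Or.inl ⟨h, hj⟩⟩
      · have : p i ∈ Set.range q := by rw [hqrange]; exact Or.inr h
        obtain ⟨j, hj⟩ := this
        exact ⟨j, Or.inr ⟨h, hj⟩⟩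
    choose σ hσ using hσ
    have hσinj : ∀ i j, σ i = σ j → i = j := by
      intro i j hij
      apply hpinj
      have h1 := hσ i
      have h2 := hσ j
      rw [hij] at h1
      rcases h1 with ⟨h1, h1'⟩ | ⟨h1, h1'⟩ <;> rcases h2 with ⟨h2, h2'⟩ | ⟨h2, h2'⟩
      · rw [h1, h2]
      · exact (hyS (by rw [← h1', h2']; exact h2)).elim
      · exact (hyS (by rw [← h2', h1']; exact h1)).elim
      · rw [← h1', ← h2']
    have hcross : ∀ i j, i ≠ j → Disjoint (W' i) (U' (σ j)) := by
      intro i j hij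
      rw [Set.disjoint_left]
      intro v hv1 hv2
      have hvS := hmeet _ _ _ hv1 hv2
      have e1 := hWP i v (hW'W i hv1) (Or.inr hvS)
      have e2 := hUQ _ v (hU'U _ hv2) (Or.inr hvS)
      rcases hσ j with ⟨h2, h2'⟩ | ⟨h2, h2'⟩
      · exact hyS (by rw [← h2', ← e2]; exact hvS)
      · exact hij (hpinj (by rw [← e1, ← h2', ← e2]))
    refine ⟨fun i => W' i ∪ U' (σ i), fun i => ⟨a i, ha i, b (σ i), hb _, ?_⟩, ?_⟩
    · have r1 : D.ReachIn (W' i ∪ U' (σ i)) (a i) (p i) :=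
        (hW'r i).mono' Set.subset_union_left fun u _ v _ => hD'D u v
      have r2 : D.ReachIn (W' i ∪ U' (σ i)) (q (σ i)) (b (σ i)) :=
        (hU'r (σ i)).mono' Set.subset_union_right fun u _ v _ => hD'D u v
      rcases hσ i with ⟨h2, h2'⟩ | ⟨h2, h2'⟩
      · refine (r1.trans (.step r1.2.1 r2.1 ?_)).trans r2
        rw [h2, h2']; exact hxy'
      · rw [h2'] at r2
        exact r1.trans r2
    · intro i j hij
      have h1 : Disjoint (W' i) (W' j) := (hWd i j hij).mono (hW'W i) (hW'W j)
      have h2 : Disjoint (U' (σ i)) (U' (σ j)) :=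
        (hUd _ _ fun h => hij (hσinj _ _ h)).mono (hU'U _) (hU'U _)
      have h3 := hcross i j hij
      have h4 := (hcross j i hij.symm).symm
      simp only [Set.disjoint_union_left, Set.disjoint_union_right]
      tauto

theorem ReachIn.exists_path {D : Dgraph V} {W : Set V} {a b : V} (h : D.ReachIn W a b) :
    ∃ L : List V, D.IsPath L ∧ (∃ hL : L ≠ [], L.head hL = a ∧ L.getLast hL = b) ∧
      ∀ v ∈ L, v ∈ W := by
  refine h.ind_head (p := fun a => ∃ L : List V, D.IsPath L ∧
    (∃ hL : L ≠ [], L.head hL = a ∧ L.getLast hL = b) ∧ ∀ v ∈ L, v ∈ W) ?_ ?_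
  · refine ⟨[b], ⟨by simp, List.isChain_singleton _⟩, ⟨by simp, by simp⟩, ?_⟩
    simpa using h.2.1
  · rintro c d - hc hd hcd ⟨L, ⟨hn, hch⟩, ⟨hL, hLh, hLl⟩, hLW⟩
    by_cases hcL : c ∈ L
    · obtain ⟨s, t, rfl⟩ := List.append_of_mem hcL
      refine ⟨c :: t, ⟨?_, ?_⟩, ⟨by simp, by simp, ?_⟩, ?_⟩
      · exact (List.nodup_append.1 hn).2.1
      · exact hch.right_of_append
      · rw [← hLl, List.getLast_append_of_ne_nil]
      · intro v hv; exact hLW v (by simp at hv ⊢; tauto)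
    · obtain ⟨e, t, rfl⟩ := List.exists_cons_of_ne_nil hL
      simp only [List.head_cons] at hLh
      subst hLh
      refine ⟨c :: e :: t, ⟨?_, ?_⟩, ⟨by simp, by simp, ?_⟩, ?_⟩
      · exact List.nodup_cons.2 ⟨hcL, hn⟩
      · exact List.isChain_cons_cons.2 ⟨hcd, hch⟩
      · rw [← hLl]; simp
      · intro v hv
        rcases List.mem_cons.1 hv with rfl | hv
        · exact hc
        · exact hLW v hv

theorem menger [Finite V] (D : Dgraph V) (A B : Set V) (n : ℕ)
    (h : ∀ S, D.Sep A B S → n ≤ S.ncard) : D.HasDisjointPaths A B n := by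
  obtain ⟨W, h1, h2⟩ := menger_aux _ D A B n rfl h
  choose a ha b hb hab using h1
  choose L hL hL2 hL3 using fun i => (hab i).exists_path
  refine ⟨L, fun i => ⟨hL i, ?_⟩, ?_⟩
  · obtain ⟨h0, h3, h4⟩ := hL2 i
    exact ⟨h0, h3 ▸ ha i, h4 ▸ hb i⟩
  · intro i j hij v hv hv'
    exact Set.disjoint_left.1 (h2 i j hij) (hL3 i v hv) (hL3 j v hv')

theorem reach_cons {D : Dgraph V} (l : List V) : ∀ u v, List.IsChain D.Adj (u :: l) →
    v ∈ u :: l → D.ReachIn {w | w ∈ u :: l} u v := by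
  induction l with
  | nil =>
    intro u v _ hv
    simp only [List.mem_singleton] at hv
    subst hv
    exact .rfl' (by simp)
  | cons c t ih =>
    intro u v hch hv
    rw [List.isChain_cons_cons] at hch
    rcases List.mem_cons.1 hv with rfl | hv
    · exact .rfl' (by simp)
    · refine .trans (.step (by simp) (by simp) hch.1) ((ih c v hch.2 hv).mono ?_)
      intro w hw
      exact List.mem_cons_of_mem _ hw

theorem reach_concat {D : Dgraph V} (l : List V) : ∀ u v, List.IsChain D.Adj (l ++ [u]) →
    v ∈ l → D.ReachIn {w | w ∈ l ++ [u]} v u := by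
  intro u v hch hv
  obtain ⟨s, t, rfl⟩ := List.append_of_mem hv
  rw [List.append_assoc] at hch
  refine (reach_cons (D := D) (t ++ [u]) v u hch.right_of_append (by simp)).mono ?_
  intro w hw
  simp at hw ⊢
  tauto

/-- What follows the `j`-th split vertex. -/
def nextSeg {i : ℕ} (Q : Fin i → List V) (Pi : List V) (j : Fin i) : List V :=
  if h : j.1 + 1 < i then Q ⟨j.1 + 1, h⟩ else Pi

theorem split_infix (i : ℕ) : ∀ (Q : Fin i → List V) (a : Fin i → V) (Pi : List V) (j : Fin i),
    ∃ l1 l2, (List.ofFn fun j : Fin i => Q j ++ [a j]).flatten ++ Pi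
      = l1 ++ ((Q j ++ [a j]) ++ nextSeg Q Pi j) ++ l2 := by
  induction i with
  | zero => intro _ _ _ j; exact j.elim0
  | succ m ih =>
    intro Q a Pi j
    rw [List.ofFn_succ]
    refine Fin.cases ?_ (fun j => ?_) j
    · cases m with
      | zero => exact ⟨[], [], by simp [nextSeg]⟩
      | succ m =>
        refine ⟨[], [a 1] ++ (List.ofFn fun j : Fin m => Q j.succ.succ ++ [a j.succ.succ]).flatten
          ++ Pi, ?_⟩
        rw [List.ofFn_succ]
        simp [nextSeg]
    · obtain ⟨l1, l2, h⟩ := ih (fun j => Q j.succ) (fun j => a j.succ) Pi j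
      refine ⟨(Q 0 ++ [a 0]) ++ l1, l2, ?_⟩
      rw [List.flatten_cons, List.append_assoc, h]
      have : nextSeg (fun j : Fin m => Q j.succ) Pi j = nextSeg Q Pi j.succ := by
        simp [nextSeg]
      rw [this]
      simp

theorem pick [Finite V] {ι : Type} [Finite ι] (J : Set ι) (F : ι → Set V) (S : Set V)
    (hS : S.ncard < J.ncard) (hF : ∀ i j v, v ∈ F i → v ∈ F j → i = j) :
    ∃ j ∈ J, F j ⊆ Sᶜ := by
  by_contra! h
  have h' : ∀ j ∈ J, ∃ v, v ∈ F j ∧ v ∈ S := by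
    intro j hj
    obtain ⟨v, hv, hv'⟩ := Set.not_subset.1 (h j hj)
    exact ⟨v, hv, not_not.1 hv'⟩
  have : J.ncard ≤ S.ncard := by
    have : ∃ f : ι → V, ∀ j ∈ J, f j ∈ F j ∧ f j ∈ S := by
      by_cases hV : Nonempty V
      · have h'' : ∀ j, ∃ v, j ∈ J → v ∈ F j ∧ v ∈ S := by
          intro j
          by_cases hj : j ∈ J
          · obtain ⟨v, hv⟩ := h' j hj
            exact ⟨v, fun _ => hv⟩
          · exact ⟨hV.some, fun h => (hj h).elim⟩
        exact Classical.skolem.1 h''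
      · obtain ⟨j, hj⟩ : J.Nonempty := by rw [← Set.ncard_pos]; omega
        exact (hV ⟨(h' j hj).choose⟩).elim
    obtain ⟨f, hf⟩ := this
    refine Set.ncard_le_ncard_of_injOn f (fun j hj => (hf j hj).2) ?_
    intro j hj j' hj' e
    exact hF j j' (f j) (hf j hj).1 (e ▸ (hf j' hj').1)
  omega

theorem exists_avoid (ℬ : Set (Set V)) (S : Set V) (h : S.ncard < brambleOrder ℬ) :
    ∃ B ∈ ℬ, B ⊆ Sᶜ := by
  by_contra! hc
  have : brambleOrder ℬ ≤ S.ncard := by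
    apply Nat.sInf_le
    refine ⟨S, fun B hB => ?_, rfl⟩
    obtain ⟨v, hv, hv'⟩ := Set.not_subset.1 (hc B hB)
    exact ⟨v, not_not.1 hv', hv⟩
  omega

end Dgraph

open Dgraph in
/-- with `g(k) = (k+1)(⌊k/2⌋+1) - 1`, `T` a `(g(k)-1, g(k)-1)`-linked set
of size `2g(k) - 1` in `D`, and `P` a directed path hitting the `T`-bramble `B_T`, the
split vertices `a 1, …, a i` of any `(i)`-split of `P` with `1 ≤ i ≤ k` form a
well-linked set in `D`. -/
theorem stmt12 {V : Type} [Finite V] (D : Dgraph V) (k : ℕ) (hk : 1 ≤ k) (T : Set V)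
    (hT : T.ncard = 2 * gfun k - 1)
    (hlinked : D.IsLinked T (gfun k - 1) (gfun k - 1))
    (P : List V) (hP : D.IsPath P)
    (hPhit : IsHittingSet (D.TBramble T (gfun k)) {v | v ∈ P})
    (i : ℕ) (hi1 : 1 ≤ i) (hik : i ≤ k)
    (Q : Fin i → List V) (Pi : List V) (ℬ : Fin i → Set (Set V)) (a : Fin i → V)
    (X : Set V) (hsplit : IsSplit D T k P i Q Pi ℬ a X) :
    D.WellLinked (Set.range a) := by
  obtain ⟨hPeq, -, hord, hsub, hhit, hX, hXord⟩ := hsplit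
  obtain ⟨hnd, hch⟩ := hP
  have hnd' := hnd
  rw [hPeq, List.nodup_append] at hnd'
  obtain ⟨hnd1, -, hnd2⟩ := hnd'
  rw [List.nodup_flatten] at hnd1
  obtain ⟨hndb, hndp⟩ := hnd1
  have hblk : ∀ j j' v, v ∈ Q j ++ [a j] → v ∈ Q j' ++ [a j'] → j = j' := by
    rw [List.pairwise_ofFn] at hndp
    intro j j' v h1 h2
    rcases lt_trichotomy j j' with h | h | h
    · exact (hndp h h1 h2).elim
    · exact h
    · exact (hndp h h2 h1).elim
  have haQ : ∀ j, a j ∉ Q j := by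
    intro j hj
    have := hndb (Q j ++ [a j]) (by rw [List.mem_ofFn]; exact ⟨j, rfl⟩)
    rw [List.nodup_append] at this
    exact this.2.2 _ hj _ (by simp) rfl
  have hblkPi : ∀ j v, v ∈ Q j ++ [a j] → v ∉ Pi := by
    intro j v hv hv'
    refine hnd2 v ?_ v hv' rfl
    rw [List.mem_flatten]
    exact ⟨_, by rw [List.mem_ofFn]; exact ⟨j, rfl⟩, hv⟩
  have hainj : Function.Injective a := fun j j' h => hblk j j' (a j) (by simp) (by simp [h])
  have hnextdisj : ∀ j j' v, v ∈ a j :: nextSeg Q Pi j → v ∈ a j' :: nextSeg Q Pi j' → j = j' := by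
    have hmix : ∀ j j', a j ∉ nextSeg Q Pi j' := by
      intro j j' h
      unfold nextSeg at h
      split_ifs at h with hlt
      · have := hblk j _ (a j) (by simp) (List.mem_append_left _ h)
        rw [← this] at h
        exact haQ j h
      · exact hblkPi j _ (by simp) h
    intro j j' v h1 h2
    rcases List.mem_cons.1 h1 with h1 | h1 <;> rcases List.mem_cons.1 h2 with h2 | h2
    · exact hainj (h1.symm.trans h2)
    · exact (hmix j j' (h1 ▸ h2)).elim
    · exact (hmix j' j (h2 ▸ h1)).elim
    · unfold nextSeg at h1 h2
      split_ifs at h1 h2 with c1 c2 c2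
      · have := hblk _ _ v (List.mem_append_left _ h1) (List.mem_append_left _ h2)
        simp only [Fin.mk.injEq] at this
        exact Fin.ext (by omega)
      · exact (hblkPi _ _ (List.mem_append_left _ h1) h2).elim
      · exact (hblkPi _ _ (List.mem_append_left _ h2) h1).elim
      · exact Fin.ext (by omega)
  have hg : 1 ≤ gfun k := by
    unfold gfun
    have : 2 * 1 ≤ (k + 1) * (k / 2 + 1) := Nat.mul_le_mul (by omega) (by omega)
    omega
  have hgk : k / 2 ≤ gfun k - i * (k / 2 + 1) := by
    unfold gfun
    have h1 : i * (k / 2 + 1) ≤ k * (k / 2 + 1) := Nat.mul_le_mul_right _ hik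
    have h2 : (k + 1) * (k / 2 + 1) = k * (k / 2 + 1) + (k / 2 + 1) := by ring
    omega
  intro X' Y' hX' hY' hdisj hcard
  apply menger
  intro S hS
  by_contra! hlt
  have hr : X'.ncard ≤ k / 2 := by
    have h1 : (X' ∪ Y').ncard ≤ (Set.range a).ncard :=
      Set.ncard_le_ncard (Set.union_subset hX' hY')
    rw [Set.ncard_union_eq hdisj, Set.ncard_range_of_injective hainj] at h1
    simp at h1
    omega
  have hJX : (a ⁻¹' X').ncard = X'.ncard :=
    Set.ncard_preimage_of_injective_subset_range hainj hX'
  have hJY : (a ⁻¹' Y').ncard = Y'.ncard :=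
    Set.ncard_preimage_of_injective_subset_range hainj hY'
  obtain ⟨j, hj, hjS⟩ := pick (a ⁻¹' X') (fun j => {v | v ∈ a j :: nextSeg Q Pi j}) S
    (by omega) hnextdisj
  obtain ⟨j', hj', hjS'⟩ := pick (a ⁻¹' Y') (fun j => {v | v ∈ Q j ++ [a j]}) S
    (by omega) hblk
  -- a bramble element after `a j`
  obtain ⟨B, hBT, hBS, u, hu, huB⟩ : ∃ B ∈ D.TBramble T (gfun k), B ⊆ Sᶜ ∧
      ∃ u ∈ nextSeg Q Pi j, u ∈ B := by
    unfold nextSeg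
    split_ifs with c
    · obtain ⟨B, hB, hBS⟩ := exists_avoid (ℬ ⟨j.1 + 1, c⟩) S (by have := hord ⟨j.1 + 1, c⟩; omega)
      obtain ⟨u, hu, hu'⟩ := hhit _ B hB
      exact ⟨B, hsub _ hB, hBS, u, hu, hu'⟩
    · obtain ⟨B, ⟨hB, hBX⟩, hBS⟩ := exists_avoid _ S (lt_of_lt_of_le (by omega) hXord)
      obtain ⟨u, hu, hu'⟩ := hPhit B hB
      refine ⟨B, hB, hBS, u, ?_, hu'⟩
      have hu2 : u ∈ P := hu
      rw [hPeq, List.mem_append] at hu2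
      rcases hu2 with hu2 | hu2
      · exfalso
        rw [List.mem_flatten] at hu2
        obtain ⟨l, hl, hul⟩ := hu2
        rw [List.mem_ofFn] at hl
        obtain ⟨m, rfl⟩ := hl
        have : u ∈ B ∩ X := by
          refine ⟨hu', ?_⟩
          rw [hX, Set.mem_iUnion]
          refine ⟨m, ?_⟩
          simpa [or_comm] using hul
        rw [hBX] at this
        exact this
      · exact hu2
  obtain ⟨B', hB', hBS'⟩ := exists_avoid (ℬ j') S (by have := hord j'; omega)
  obtain ⟨u', hu', huB'⟩ := hhit _ B' hB'
  have hBT' := hsub _ hB'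
  obtain ⟨w, hw, hw'⟩ : (B ∩ B').Nonempty := by
    by_contra hne
    have hd : Disjoint (B ∩ T) (B' ∩ T) := by
      rw [Set.disjoint_left]
      intro v h1 h2
      exact hne ⟨v, h1.1, h2.1⟩
    have h1 : ((B ∩ T) ∪ (B' ∩ T)).ncard ≤ T.ncard :=
      Set.ncard_le_ncard (Set.union_subset Set.inter_subset_right Set.inter_subset_right)
    rw [Set.ncard_union_eq hd] at h1
    have h2 := hBT.2
    have h3 := hBT'.2
    omega
  have r1 : D.ReachIn Sᶜ (a j) u := by
    refine (reach_cons _ _ _ ?_ (List.mem_cons_of_mem _ hu)).mono hjS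
    obtain ⟨l1, l2, h⟩ := split_infix i Q a Pi j
    have hinf : (a j :: nextSeg Q Pi j) <:+: P := ⟨l1 ++ Q j, l2, by rw [hPeq, h]; simp⟩
    exact hch.infix hinf
  have r4 : D.ReachIn Sᶜ u' (a j') := by
    refine (reach_concat _ _ _ ?_ hu').mono hjS'
    obtain ⟨l1, l2, h⟩ := split_infix i Q a Pi j'
    have hinf : (Q j' ++ [a j']) <:+: P :=
      ⟨l1, nextSeg Q Pi j' ++ l2, by rw [hPeq, h]; simp⟩
    exact hch.infix hinf
  have r2 : D.ReachIn Sᶜ u w := (hBT.1 u huB w hw).mono hBS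
  have r3 : D.ReachIn Sᶜ w u' := (hBT'.1 w hw' u' huB').mono hBS'
  exact hS _ hj _ hj' (((r1.trans r2).trans r3).trans r4)
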